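/- Let d = 1 and let μ be a probability measure on [0,1] satisfying hypothesis H_μ with density f. Then the map m ↦ (∫_{C_i(m)} (m_i − x) f(x) dx)_{1≤i≤n}, which is the gradient of the distortion V_n on F_n^+, has a unique zero m★_n in F_n^+; this point is a minimum of V_n, i.e. V_n(m★_n) = inf{V_n(m) : m ∈ F_n^+}. -/

import Mathlib

open MeasureTheory Set Filter Topology
open scoped Classical ENNReal

noncomputable section

/-- `F_n^+` : increasingly ordered states with values in `(0,1)`. -/
def Fplus (n : ℕ) : Set (Fin n → ℝ) :=
  {m | StrictMono m ∧ ∀ i, m i ∈ Set.Ioo (0 : ℝ) 1}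

/-- The Voronoi boundary points `x_0 = 0`, `x_j = (m_j + m_{j+1})/2`, `x_n = 1`. -/
def somBnd {n : ℕ} (m : Fin n → ℝ) (j : ℕ) : ℝ :=
  if j = 0 then 0
  else if h : j < n then
    (m ⟨j - 1, lt_of_le_of_lt (Nat.sub_le j 1) h⟩ + m ⟨j, h⟩) / 2
  else 1

/-- The one-dimensional distortion `V_n(m) = (1/2) ∫ min_i |m_i - x|² dμ(x)`. -/
def distortion1 {n : ℕ} (μ : Measure ℝ) (m : Fin n → ℝ) : ℝ :=
  (1 / 2) * ∫ x, (⨅ i, |m i - x| ^ 2) ∂μ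

/-- The `i`-th component of the gradient of the distortion on `F_n^+` :
`∫_{C_i(m)} (m_i - x) f(x) dx`. -/
def gradV {n : ℕ} (f : ℝ → ℝ) (m : Fin n → ℝ) (i : Fin n) : ℝ :=
  ∫ x in Set.Icc (somBnd m i.1) (somBnd m (i.1 + 1)), (m i - x) * f x

/-- Hypothesis `H_μ` on the density `f`. -/
def Hmu (f : ℝ → ℝ) : Prop :=
  (∀ x ∈ Set.Ioo (0 : ℝ) 1, 0 < f x) ∧
  (StrictConcaveOn ℝ (Set.Ioo (0 : ℝ) 1) (fun x => Real.log (f x)) ∨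
    (ConcaveOn ℝ (Set.Ioo (0 : ℝ) 1) (fun x => Real.log (f x)) ∧
      ∃ a b : ℝ, Tendsto f (nhdsWithin 0 (Set.Ioi 0)) (nhds a) ∧
        Tendsto f (nhdsWithin 1 (Set.Iio 1)) (nhds b) ∧ 0 < a + b))

/-!
Existence: the distortion is continuous, and projecting the points onto `[0, 1]` does not increase
it, so it has a global minimizer in `[0, 1]ⁿ`. A minimizer has distinct points, as a duplicate could
be moved to an unoccupied place of the support. After sorting, varying one point at a time gives
the vanishing of the gradient.

Uniqueness: log-concavity of `f` says that `f (x + h) / f x` decreases in `x`. Hence, when a cell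
`[a, b]` and its balanced point `t` move right by `h ≥ 0`, the moment `∫ (t - x) f x` cannot become
negative. If `m` and `m'` are two zeros with `m 0 ≤ m' 0`, this forces the displacements
`m' i - m i` to increase with `i`, every cell boundary moving at least as far as the point to its
left; since the last boundary is fixed at `1`, no displacement is positive.
-/

section LogConcave

lemma concaveOn_add_le_add_shift {𝕜 : Type*} [Field 𝕜] [LinearOrder 𝕜] [IsStrictOrderedRing 𝕜]
    {s : Set 𝕜} {φ : 𝕜 → 𝕜} (hφ : ConcaveOn 𝕜 s φ) {x y h : 𝕜} (hx : x ∈ s) (hyh : y + h ∈ s)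
    (hxy : x ≤ y) (hh : 0 ≤ h) : φ (y + h) + φ x ≤ φ (x + h) + φ y := by
  obtain hlen | hlen := (show 0 ≤ y - x + h by linarith).eq_or_lt
  · obtain rfl : h = 0 := by linarith
    obtain rfl : x = y := by linarith
    exact le_rfl
  set α := (y - x) / (y - x + h) with hα
  set β := h / (y - x + h) with hβ
  have hα0 : 0 ≤ α := div_nonneg (by linarith) hlen.le
  have hβ0 : 0 ≤ β := div_nonneg hh hlen.le
  have hαβ : α + β = 1 := by rw [hα, hβ, ← add_div, div_self hlen.ne']
  have hβlen : β * (y - x + h) = h := div_mul_cancel₀ h hlen.ne'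
  have hxh : α • x + β • (y + h) = x + h := by
    simp only [smul_eq_mul]; linear_combination x * hαβ + hβlen
  have hy : β • x + α • (y + h) = y := by
    simp only [smul_eq_mul]; linear_combination (y + h) * hαβ - hβlen
  have concave_xh := hφ.2 hx hyh hα0 hβ0 hαβ
  have concave_y := hφ.2 hx hyh hβ0 hα0 (by rw [add_comm, hαβ])
  rw [hxh] at concave_xh
  rw [hy] at concave_y
  simp only [smul_eq_mul] at concave_xh concave_y
  linear_combination concave_xh + concave_y - (φ x + φ (y + h)) * hαβ

/-- Log-concavity of a function on a set on which it is positive. -/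
def LogConcaveOn {E : Type*} [AddCommMonoid E] [SMul ℝ E] (s : Set E) (f : E → ℝ) : Prop :=
  (∀ x ∈ s, 0 < f x) ∧ ConcaveOn ℝ s fun x => Real.log (f x)

lemma LogConcaveOn.mul_le_mul_shift {s : Set ℝ} {f : ℝ → ℝ} (hf : LogConcaveOn s f) {x y h : ℝ}
    (hx : x ∈ s) (hyh : y + h ∈ s) (hxy : x ≤ y) (hh : 0 ≤ h) :
    f (y + h) * f x ≤ f (x + h) * f y := by
  have hs := hf.2.1.ordConnected.out hx hyh
  have hfx := hf.1 x hx
  have hfy := hf.1 y (hs ⟨hxy, by linarith⟩)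
  have hfxh := hf.1 (x + h) (hs ⟨by linarith, by linarith⟩)
  have hfyh := hf.1 (y + h) hyh
  rw [← Real.log_le_log_iff (by positivity) (by positivity), Real.log_mul hfyh.ne' hfx.ne',
    Real.log_mul hfxh.ne' hfy.ne']
  exact concaveOn_add_le_add_shift hf.2 hx hyh hxy hh

lemma LogConcaveOn.continuousOn {E : Type*} [NormedAddCommGroup E] [NormedSpace ℝ E]
    [FiniteDimensional ℝ E] {s : Set E} {f : E → ℝ} (hf : LogConcaveOn s f) (hs : IsOpen s) :
    ContinuousOn f s :=
  (Real.continuous_exp.comp_continuousOn (hf.2.continuousOn hs)).congr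
    fun x hx => (Real.exp_log (hf.1 x hx)).symm

end LogConcave

section Density

variable {f : ℝ → ℝ} {a b : ℝ}

lemma indicator_Ioo_ae_eq_self (hf : ∀ x ∉ Icc a b, f x = 0) :
    (Ioo a b).indicator f =ᵐ[volume] f :=
  (indicator_ae_eq_of_ae_eq_set Ioo_ae_eq_Icc).trans <| .of_eq <|
    indicator_eq_self.2 fun _ hx => by_contra fun hxs => hx (hf _ hxs)

lemma LogConcaveOn.aemeasurable (hf : LogConcaveOn (Ioo a b) f) (hf0 : ∀ x ∉ Icc a b, f x = 0) :
    AEMeasurable f :=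
  ((aemeasurable_indicator_iff measurableSet_Ioo).2
    ((hf.continuousOn isOpen_Ioo).aemeasurable measurableSet_Ioo)).congr
    (indicator_Ioo_ae_eq_self hf0)

lemma ae_nonneg_of_pos_on_Ioo (hpos : ∀ x ∈ Ioo a b, 0 < f x) (hf0 : ∀ x ∉ Icc a b, f x = 0) :
    0 ≤ᵐ[volume] f := by
  filter_upwards [indicator_Ioo_ae_eq_self hf0] with x hx
  rw [← hx]
  exact indicator_nonneg (fun y hy => (hpos y hy).le) x

lemma support_withDensity_ofReal (hab : a < b) (hf : AEMeasurable f)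
    (hpos : ∀ x ∈ Ioo a b, 0 < f x) (hf0 : ∀ x ∉ Icc a b, f x = 0) :
    (volume.withDensity fun x => ENNReal.ofReal (f x)).support = Icc a b := by
  apply Subset.antisymm
  · refine Measure.support_subset_of_isClosed isClosed_Icc ?_
    rw [mem_ae_iff, withDensity_apply _ measurableSet_Icc.compl]
    exact setLIntegral_eq_zero measurableSet_Icc.compl fun x hx => by simp [hf0 x hx]
  · have hac : volume.restrict (Ioo a b) ≪
        volume.withDensity fun x => ENNReal.ofReal (f x) := by
      refine (withDensity_absolutelyContinuous' hf.ennreal_ofReal.restrict ?_).trans ?_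
      · filter_upwards [ae_restrict_mem measurableSet_Ioo] with x hx
        simpa using hpos x hx
      · rw [← restrict_withDensity measurableSet_Ioo]
        exact Measure.absolutelyContinuous_of_le Measure.restrict_le_self
    have hIoo : Ioo a b ⊆ (volume.withDensity fun x => ENNReal.ofReal (f x)).support :=
      fun x hx => hac.support_mono <| Measure.interior_inter_support <| by
        simpa [Measure.support_eq_univ] using hx
    rw [← closure_Ioo hab.ne]
    exact closure_minimal hIoo Measure.isClosed_support

lemma integrable_of_isFiniteMeasure_withDensity {X : Type*} [MeasurableSpace X] {ν : Measure X}
    {g : X → ℝ} (hg : AEMeasurable g ν) (hg0 : 0 ≤ᵐ[ν] g)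
    [hfin : IsFiniteMeasure (ν.withDensity fun x => ENNReal.ofReal (g x))] : Integrable g ν := by
  refine (lintegral_ofReal_ne_top_iff_integrable hg.aestronglyMeasurable hg0).1 ?_
  simpa [withDensity_apply] using hfin.measure_univ_lt_top.ne

lemma setIntegral_withDensity_ofReal {X : Type*} [MeasurableSpace X] {ν : Measure X}
    {g : X → ℝ} (hg : AEMeasurable g ν) (hg0 : 0 ≤ᵐ[ν] g) {s : Set X} (hs : MeasurableSet s)
    (φ : X → ℝ) :
    ∫ x in s, φ x ∂(ν.withDensity fun x => ENNReal.ofReal (g x)) = ∫ x in s, φ x * g x ∂ν := by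
  rw [setIntegral_withDensity_eq_setIntegral_toReal_smul₀ hg.ennreal_ofReal.restrict (by simp) _ hs]
  refine integral_congr_ae (ae_restrict_of_ae ?_)
  filter_upwards [hg0] with x hx
  rw [ENNReal.toReal_ofReal hx, smul_eq_mul, mul_comm]

end Density

section Support

variable {X : Type*} [TopologicalSpace X] [MeasurableSpace X] {μ : Measure X}

lemma integral_pos_of_mem_support {g : X → ℝ} (hg0 : 0 ≤ᵐ[μ] g) (hg : Integrable g μ) {p : X}
    (hp : p ∈ μ.support) (hpos : ∀ᶠ x in 𝓝 p, 0 < g x) : 0 < ∫ x, g x ∂μ := by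
  rw [integral_pos_iff_support_of_nonneg_ae hg0 hg]
  exact (Measure.mem_support_iff_forall p).1 hp _ (hpos.mono fun x hx => hx.ne')

lemma restrict_support [HereditarilyLindelofSpace X] : μ.restrict μ.support = μ :=
  Measure.restrict_eq_self_of_ae_mem Measure.support_mem_ae

lemma integrable_of_isCompact_support [HereditarilyLindelofSpace X] [OpensMeasurableSpace X]
    [IsFiniteMeasureOnCompacts μ] (hμ : IsCompact μ.support) {g : X → ℝ} (hg : Continuous g) :
    Integrable g μ := by
  rw [← restrict_support (μ := μ)]
  exact hg.continuousOn.integrableOn_compact' hμ Measure.isClosed_support.measurableSet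

end Support

lemma mem_Ioo_of_setIntegral_sub_eq_zero {μ : Measure ℝ} [IsFiniteMeasureOnCompacts μ]
    {a b c p : ℝ} (hp : p ∈ μ.support) (hpab : p ∈ Ioo a b)
    (hc : ∫ x in Icc a b, (c - x) ∂μ = 0) : c ∈ Ioo a b := by
  have hpC : p ∈ (μ.restrict (Icc a b)).support :=
    Measure.interior_inter_support ⟨by rwa [interior_Icc], hp⟩
  have hint : IntegrableOn (fun x => c - x) (Icc a b) μ :=
    (by fun_prop : Continuous fun x => c - x).continuousOn.integrableOn_compact isCompact_Icc
  constructor <;> by_contra! hcab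
  · have hpos : 0 < ∫ x in Icc a b, -(c - x) ∂μ := by
      refine integral_pos_of_mem_support ?_ hint.neg hpC ?_
      · filter_upwards [ae_restrict_mem measurableSet_Icc] with x hx
        simp only [Pi.zero_apply]
        linarith [hx.1]
      · filter_upwards [lt_mem_nhds hpab.1] with x hx
        linarith
    rw [integral_neg, hc, neg_zero] at hpos
    exact hpos.false
  · refine (integral_pos_of_mem_support ?_ hint hpC ?_).ne' hc
    · filter_upwards [ae_restrict_mem measurableSet_Icc] with x hx
      simp only [Pi.zero_apply]
      linarith [hx.2]
    · filter_upwards [gt_mem_nhds hpab.2] with x hx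
      linarith

section SqDist

variable {ι : Type*}

/-- The squared distance from `x` to the nearest of the points `m i`: the integrand of the
distortion. -/
def sqDist (m : ι → ℝ) (x : ℝ) : ℝ := ⨅ i, |m i - x| ^ 2

lemma sqDist_le [Finite ι] (m : ι → ℝ) (x : ℝ) (i : ι) : sqDist m x ≤ |m i - x| ^ 2 :=
  Finite.ciInf_le _ i

lemma sqDist_comp_equiv {ι' : Type*} (m : ι → ℝ) (σ : ι' ≃ ι) : sqDist (m ∘ σ) = sqDist m :=
  funext fun x => σ.iInf_comp (g := fun i => |m i - x| ^ 2)

lemma sqDist_pos [Finite ι] [Nonempty ι] {m : ι → ℝ} {x : ℝ} (hx : x ∉ range m) :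
    0 < sqDist m x := by
  obtain ⟨i, hi⟩ := exists_eq_ciInf_of_finite (f := fun i => |m i - x| ^ 2)
  have hne : m i - x ≠ 0 := fun h => hx ⟨i, sub_eq_zero.1 h⟩
  rw [sqDist, ← hi]
  positivity

lemma continuous_uncurry_sqDist [Finite ι] [Nonempty ι] :
    Continuous (Function.uncurry (sqDist : (ι → ℝ) → ℝ → ℝ)) := by
  cases nonempty_fintype ι
  have heq : Function.uncurry (sqDist : (ι → ℝ) → ℝ → ℝ) =
      fun p => Finset.univ.inf' Finset.univ_nonempty fun i => |p.1 i - p.2| ^ 2 :=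
    funext fun p => (Finset.inf'_univ_eq_ciInf _).symm
  rw [heq]
  fun_prop

lemma continuous_sqDist [Finite ι] [Nonempty ι] (m : ι → ℝ) : Continuous (sqDist m) :=
  continuous_uncurry_sqDist.uncurry_left m

lemma sqDist_projIcc_le [Finite ι] {a b : ℝ} (hab : a ≤ b) (m : ι → ℝ) {x : ℝ}
    (hx : x ∈ Icc a b) : sqDist (fun i => (projIcc a b hab (m i) : ℝ)) x ≤ sqDist m x := by
  refine Finite.ciInf_mono fun i => ?_
  have hproj := abs_projIcc_sub_projIcc hab (c := m i) (d := x)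
  rw [projIcc_of_mem hab hx] at hproj
  gcongr

lemma sqDist_update_le_of_eq [Finite ι] [DecidableEq ι] {m : ι → ℝ} {i j : ι} (hij : i ≠ j)
    (hm : m i = m j) (c x : ℝ) : sqDist (Function.update m j c) x ≤ sqDist m x := by
  have : Nonempty ι := ⟨i⟩
  refine le_ciInf fun k => ?_
  obtain rfl | hk := eq_or_ne k j
  · simpa [hij, hm] using sqDist_le (Function.update m k c) x i
  · simpa [hk] using sqDist_le (Function.update m j c) x k

/-- Here `C` plays the role of the Voronoi cell of `m i`: only the integrand on `C` sees the
displacement of `m i`, as elsewhere another point is at least as near. -/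
lemma sqDist_update_le_add_indicator [Finite ι] [DecidableEq ι] {m : ι → ℝ} {i : ι} {C : Set ℝ}
    {x : ℝ} (hC : x ∈ C → ∀ k, |m i - x| ^ 2 ≤ |m k - x| ^ 2)
    (hCc : x ∉ C → ∃ k ≠ i, |m k - x| ^ 2 ≤ |m i - x| ^ 2) (c : ℝ) :
    sqDist (Function.update m i c) x ≤
      sqDist m x + C.indicator (fun x => |c - x| ^ 2 - |m i - x| ^ 2) x := by
  have : Nonempty ι := ⟨i⟩
  by_cases hx : x ∈ C
  · have hold : |m i - x| ^ 2 ≤ sqDist m x := le_ciInf (hC hx)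
    have hnew : sqDist (Function.update m i c) x ≤ |c - x| ^ 2 := by
      simpa using sqDist_le (Function.update m i c) x i
    rw [indicator_of_mem hx]
    linarith
  · obtain ⟨k, hki, hk⟩ := hCc hx
    rw [indicator_of_notMem hx, add_zero]
    refine le_ciInf fun l => ?_
    obtain rfl | hl := eq_or_ne l i
    · exact (by simpa [hki] using sqDist_le (Function.update m l c) x k : _ ≤ _).trans hk
    · simpa [hl] using sqDist_le (Function.update m i c) x l

end SqDist

section Voronoi

variable {n : ℕ} {m : Fin (n + 1) → ℝ}

/-- The closed Voronoi cell `C_i(m)` relative to `[0, 1]`. -/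
def voronoiCell {n : ℕ} (m : Fin n → ℝ) (i : Fin n) : Set ℝ :=
  Icc (somBnd m i) (somBnd m (i + 1))

lemma measurableSet_voronoiCell {n : ℕ} (m : Fin n → ℝ) (i : Fin n) :
    MeasurableSet (voronoiCell m i) := measurableSet_Icc

lemma somBnd_zero {n : ℕ} (m : Fin n → ℝ) : somBnd m 0 = 0 := if_pos rfl

lemma somBnd_last (m : Fin (n + 1) → ℝ) : somBnd m (n + 1) = 1 := by simp [somBnd]

lemma somBnd_succ (m : Fin (n + 1) → ℝ) (i : Fin n) :
    somBnd m (i + 1) = (m i.castSucc + m i.succ) / 2 := by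
  simp [somBnd, Fin.succ, Fin.castSucc, Fin.castAdd, Fin.castLE]

lemma somBnd_mem_Icc {n : ℕ} {m : Fin n → ℝ} (hm : ∀ i, m i ∈ Icc (0 : ℝ) 1) (j : ℕ) :
    somBnd m j ∈ Icc (0 : ℝ) 1 := by
  unfold somBnd
  split_ifs with hj hjn
  · exact left_mem_Icc.2 zero_le_one
  · have hprev := hm ⟨j - 1, (Nat.sub_le j 1).trans_lt hjn⟩
    have hnext := hm ⟨j, hjn⟩
    constructor <;> linarith [hprev.1, hprev.2, hnext.1, hnext.2]
  · exact right_mem_Icc.2 zero_le_one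

lemma somBnd_succ_lt (hm : StrictMono m) (i : Fin n) : somBnd m (i + 1) < m i.succ := by
  rw [somBnd_succ]
  linarith [hm i.castSucc_lt_succ]

lemma lt_somBnd_succ (hm : StrictMono m) (i : Fin n) : m i.castSucc < somBnd m (i + 1) := by
  rw [somBnd_succ]
  linarith [hm i.castSucc_lt_succ]

lemma somBnd_lt_of_pos (hm : StrictMono m) (i : Fin (n + 1)) (hi : 0 < m i) :
    somBnd m i < m i := by
  cases i using Fin.cases with
  | zero => simpa [somBnd_zero] using hi
  | succ i => simpa using somBnd_succ_lt hm i

lemma lt_somBnd_of_lt_one (hm : StrictMono m) (i : Fin (n + 1)) (hi : m i < 1) :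
    m i < somBnd m (i + 1) := by
  cases i using Fin.lastCases with
  | last => simpa [somBnd_last] using hi
  | cast i => simpa using lt_somBnd_succ hm i

lemma le_somBnd_of_le_one (hm : StrictMono m) (i : Fin (n + 1)) (hi : m i ≤ 1) :
    m i ≤ somBnd m (i + 1) := by
  cases i using Fin.lastCases with
  | last => simpa [somBnd_last] using hi
  | cast i => simpa using (lt_somBnd_succ hm i).le

lemma somBnd_lt_somBnd_succ (hm : StrictMono m) (hm01 : ∀ i, m i ∈ Icc (0 : ℝ) 1)
    (i : Fin (n + 1)) : somBnd m i < somBnd m (i + 1) := by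
  cases i using Fin.cases with
  | zero =>
    cases n with
    | zero => simp [somBnd_zero, somBnd_last]
    | succ n =>
      have hlt := lt_somBnd_succ hm 0
      rw [Fin.castSucc_zero, Fin.val_zero] at hlt
      simpa [somBnd_zero] using (hm01 0).1.trans_lt hlt
  | succ i =>
    exact (somBnd_succ_lt hm i).trans_le (le_somBnd_of_le_one hm i.succ (hm01 _).2)

lemma sq_abs_sub_le_of_le_midpoint {p q x : ℝ} (hpq : p ≤ q) (hx : x ≤ (p + q) / 2) :
    |p - x| ^ 2 ≤ |q - x| ^ 2 := by
  rw [sq_abs, sq_abs]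
  nlinarith

lemma sq_abs_sub_le_of_midpoint_le {p q x : ℝ} (hpq : p ≤ q) (hx : (p + q) / 2 ≤ x) :
    |q - x| ^ 2 ≤ |p - x| ^ 2 := by
  rw [sq_abs, sq_abs]
  nlinarith

lemma sq_abs_sub_le_of_mem_voronoiCell (hm : Monotone m) {i : Fin (n + 1)} {x : ℝ}
    (hx : x ∈ voronoiCell m i) (k : Fin (n + 1)) : |m i - x| ^ 2 ≤ |m k - x| ^ 2 := by
  obtain hik | rfl | hki := lt_trichotomy i k
  · cases i using Fin.lastCases with
    | last => exact absurd hik k.le_last.not_gt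
    | cast i =>
      have hxr : x ≤ (m i.castSucc + m i.succ) / 2 := by
        simpa [somBnd_succ] using hx.2
      refine sq_abs_sub_le_of_le_midpoint (hm hik.le) ?_
      linarith [hm (Fin.castSucc_lt_iff_succ_le.1 hik)]
  · exact le_rfl
  · cases i using Fin.cases with
    | zero => exact absurd hki k.not_lt_zero
    | succ i =>
      have hxl : (m i.castSucc + m i.succ) / 2 ≤ x := by
        simpa [somBnd_succ] using hx.1
      refine sq_abs_sub_le_of_midpoint_le (hm hki.le) ?_
      linarith [hm (Fin.le_castSucc_iff.2 hki)]

lemma exists_sq_abs_sub_le_of_notMem_voronoiCell (hm : Monotone m) {i : Fin (n + 1)} {x : ℝ}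
    (hx01 : x ∈ Icc (0 : ℝ) 1) (hx : x ∉ voronoiCell m i) :
    ∃ k ≠ i, |m k - x| ^ 2 ≤ |m i - x| ^ 2 := by
  rw [voronoiCell, mem_Icc, not_and_or, not_le, not_le] at hx
  obtain hxl | hxr := hx
  · cases i using Fin.cases with
    | zero => exact absurd hx01.1 (by simpa [somBnd_zero] using hxl)
    | succ i =>
      rw [Fin.val_succ, somBnd_succ] at hxl
      exact ⟨i.castSucc, i.castSucc_lt_succ.ne,
        sq_abs_sub_le_of_le_midpoint (hm i.castSucc_lt_succ.le) hxl.le⟩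
  · cases i using Fin.lastCases with
    | last => exact absurd hx01.2 (by simpa [somBnd_last] using hxr)
    | cast i =>
      rw [Fin.val_castSucc, somBnd_succ] at hxr
      exact ⟨i.succ, i.castSucc_lt_succ.ne',
        sq_abs_sub_le_of_midpoint_le (hm i.castSucc_lt_succ.le) hxr.le⟩

end Voronoi

section Minimizer

lemma distortion1_comp_perm {n : ℕ} (μ : Measure ℝ) (m : Fin n → ℝ)
    (σ : Equiv.Perm (Fin n)) :
    distortion1 μ (m ∘ σ) = distortion1 μ m :=
  congrArg (fun g => 1 / 2 * ∫ x, g x ∂μ) (sqDist_comp_equiv m σ)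

variable {n : ℕ} {μ : Measure ℝ} [IsFiniteMeasure μ]

lemma integrable_sqDist {ι : Type*} [Finite ι] [Nonempty ι] (hμ : IsCompact μ.support)
    (m : ι → ℝ) : Integrable (sqDist m) μ :=
  integrable_of_isCompact_support hμ (continuous_sqDist m)

lemma continuous_distortion1 (hμ : IsCompact μ.support) :
    Continuous fun m : Fin (n + 1) → ℝ => distortion1 μ m := by
  have hcont := continuous_parametric_integral_of_continuous (μ := μ)
    (continuous_uncurry_sqDist (ι := Fin (n + 1))) hμ
  simp only [restrict_support] at hcont
  exact continuous_const.mul hcont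

lemma distortion1_projIcc_le {a b : ℝ} (hab : a ≤ b) (hμ : μ.support ⊆ Icc a b)
    (m : Fin (n + 1) → ℝ) :
    distortion1 μ (fun i => (projIcc a b hab (m i) : ℝ)) ≤ distortion1 μ m := by
  have hμc : IsCompact μ.support := isCompact_Icc.of_isClosed_subset Measure.isClosed_support hμ
  refine mul_le_mul_of_nonneg_left (integral_mono_ae (integrable_sqDist hμc _)
    (integrable_sqDist hμc m) ?_) (by norm_num)
  filter_upwards [Measure.support_mem_ae] with x hx
  exact sqDist_projIcc_le hab m (hμ hx)

lemma exists_distortion1_minimizer {a b : ℝ} (hab : a ≤ b) (hμ : μ.support ⊆ Icc a b) (n : ℕ) :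
    ∃ m : Fin (n + 1) → ℝ, (∀ i, m i ∈ Icc a b) ∧
      ∀ m' : Fin (n + 1) → ℝ, distortion1 μ m ≤ distortion1 μ m' := by
  have hμc : IsCompact μ.support := isCompact_Icc.of_isClosed_subset Measure.isClosed_support hμ
  have hcube : IsCompact (univ.pi fun _ : Fin (n + 1) => Icc a b) :=
    isCompact_univ_pi fun _ => isCompact_Icc
  obtain ⟨m, hm, hmin⟩ := hcube.exists_isMinOn ⟨fun _ => a, fun _ _ => left_mem_Icc.2 hab⟩
    (continuous_distortion1 hμc).continuousOn
  refine ⟨m, fun i => hm i trivial, fun m' => ?_⟩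
  exact (hmin fun i _ => (projIcc a b hab (m' i)).2).trans (distortion1_projIcc_le hab hμ m')

lemma injective_of_forall_distortion1_le (hμ : IsCompact μ.support) (hinf : μ.support.Infinite)
    {m : Fin (n + 1) → ℝ} (hmin : ∀ m' : Fin (n + 1) → ℝ, distortion1 μ m ≤ distortion1 μ m') :
    Function.Injective m := by
  intro i j hij
  by_contra hne
  obtain ⟨p, hp, hpm⟩ := hinf.exists_notMem_finite (finite_range m)
  set m' := Function.update m j p with hm'
  have hzero : sqDist m' p ≤ 0 := by simpa [hm'] using sqDist_le m' p j
  have hgain : ∀ᶠ x in 𝓝 p, 0 < sqDist m x - sqDist m' x :=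
    ((continuous_sqDist m).sub (continuous_sqDist m')).continuousAt.eventually_const_lt
      (sub_pos.2 (hzero.trans_lt (sqDist_pos hpm)))
  have hpos : 0 < ∫ x, (sqDist m x - sqDist m' x) ∂μ :=
    integral_pos_of_mem_support
      (Eventually.of_forall fun x => sub_nonneg.2 (sqDist_update_le_of_eq hne hij p x))
      ((integrable_sqDist hμ m).sub (integrable_sqDist hμ m')) hp hgain
  rw [integral_sub (integrable_sqDist hμ m) (integrable_sqDist hμ m')] at hpos
  have hle : 1 / 2 * ∫ x, sqDist m x ∂μ ≤ 1 / 2 * ∫ x, sqDist m' x ∂μ := hmin m'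
  linarith

lemma integral_voronoiCell_variation_nonneg (hμ : μ.support ⊆ Icc 0 1) {m : Fin (n + 1) → ℝ}
    (hm : Monotone m) (hmin : ∀ m' : Fin (n + 1) → ℝ, distortion1 μ m ≤ distortion1 μ m')
    (i : Fin (n + 1)) (c : ℝ) :
    0 ≤ ∫ x in voronoiCell m i, (|c - x| ^ 2 - |m i - x| ^ 2) ∂μ := by
  have hμc : IsCompact μ.support := isCompact_Icc.of_isClosed_subset Measure.isClosed_support hμ
  have hcell := measurableSet_voronoiCell m i
  have hvar : Integrable
      ((voronoiCell m i).indicator fun x => |c - x| ^ 2 - |m i - x| ^ 2) μ :=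
    (integrable_of_isCompact_support hμc (by fun_prop)).indicator hcell
  have hupdate : ∫ x, sqDist (Function.update m i c) x ∂μ ≤
      ∫ x, sqDist m x +
        (voronoiCell m i).indicator (fun x => |c - x| ^ 2 - |m i - x| ^ 2) x ∂μ := by
    refine integral_mono_ae (integrable_sqDist hμc _) ((integrable_sqDist hμc m).add hvar) ?_
    filter_upwards [Measure.support_mem_ae] with x hx
    exact sqDist_update_le_add_indicator (sq_abs_sub_le_of_mem_voronoiCell hm)
      (exists_sq_abs_sub_le_of_notMem_voronoiCell hm (hμ hx)) c
  rw [integral_add (integrable_sqDist hμc m) hvar, integral_indicator hcell] at hupdate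
  have hle : 1 / 2 * ∫ x, sqDist m x ∂μ ≤ 1 / 2 * ∫ x, sqDist (Function.update m i c) x ∂μ :=
    hmin _
  linarith

lemma integral_voronoiCell_sub_eq_zero (hμ : μ.support ⊆ Icc 0 1) {m : Fin (n + 1) → ℝ}
    (hm : Monotone m) (hmin : ∀ m' : Fin (n + 1) → ℝ, distortion1 μ m ≤ distortion1 μ m')
    (i : Fin (n + 1)) :
    ∫ x in voronoiCell m i, (m i - x) ∂μ = 0 := by
  set C := voronoiCell m i
  have hint : IntegrableOn (fun x => m i - x) C μ :=
    (by fun_prop : Continuous fun x => m i - x).continuousOn.integrableOn_compact isCompact_Icc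
  have hquad (t : ℝ) : 0 ≤ μ.real C * (t * t) + (2 * ∫ x in C, (m i - x) ∂μ) * t + 0 :=
    calc 0 ≤ ∫ x in C, (|(m i + t) - x| ^ 2 - |m i - x| ^ 2) ∂μ :=
          integral_voronoiCell_variation_nonneg hμ hm hmin i _
      _ = ∫ x in C, (t * t + 2 * t * (m i - x)) ∂μ := by
          congr with x
          rw [sq_abs, sq_abs]
          ring
      _ = μ.real C * (t * t) + (2 * ∫ x in C, (m i - x) ∂μ) * t + 0 := by
          rw [integral_add (integrable_const _) (hint.const_mul _), setIntegral_const,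
            integral_const_mul, smul_eq_mul]
          ring
  have hdiscrim := discrim_le_zero hquad
  rw [discrim, mul_zero, sub_zero] at hdiscrim
  simpa using hdiscrim.antisymm (sq_nonneg _)

lemma exists_distortion1_minimizer_mem_Fplus (hμ : μ.support = Icc 0 1) (n : ℕ) :
    ∃ m ∈ Fplus (n + 1), (∀ i, ∫ x in voronoiCell m i, (m i - x) ∂μ = 0) ∧
      ∀ m' : Fin (n + 1) → ℝ, distortion1 μ m ≤ distortion1 μ m' := by
  have hinf : μ.support.Infinite := hμ ▸ Icc_infinite zero_lt_one
  obtain ⟨p, hp01, hpmin⟩ := exists_distortion1_minimizer zero_le_one hμ.subset n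
  set m := p ∘ Tuple.sort p
  have hmin (m' : Fin (n + 1) → ℝ) : distortion1 μ m ≤ distortion1 μ m' :=
    (distortion1_comp_perm μ p _).trans_le (hpmin m')
  have hm : StrictMono m := (Tuple.monotone_sort p).strictMono_of_injective <|
    injective_of_forall_distortion1_le (hμ ▸ isCompact_Icc) hinf hmin
  have hm01 (i : Fin (n + 1)) : m i ∈ Icc (0 : ℝ) 1 := hp01 _
  have hcrit := integral_voronoiCell_sub_eq_zero hμ.subset hm.monotone hmin
  have hcell (i : Fin (n + 1)) : m i ∈ Ioo (somBnd m i) (somBnd m (i + 1)) := by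
    obtain ⟨q, hq⟩ := nonempty_Ioo.2 (somBnd_lt_somBnd_succ hm hm01 i)
    have hq01 : q ∈ μ.support := hμ ▸ ⟨(somBnd_mem_Icc hm01 _).1.trans hq.1.le,
      hq.2.le.trans (somBnd_mem_Icc hm01 _).2⟩
    exact mem_Ioo_of_setIntegral_sub_eq_zero hq01 hq (hcrit i)
  exact ⟨m, ⟨hm, fun i => ⟨(somBnd_mem_Icc hm01 _).1.trans_lt (hcell i).1,
    (hcell i).2.trans_le (somBnd_mem_Icc hm01 _).2⟩⟩, hcrit, hmin⟩

end Minimizer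

section Moment

variable {f : ℝ → ℝ} {a a' b b' l t u h : ℝ}

/-- The moment about `t` of the density `f` on the interval from `a` to `b`, signed so that the
components of the gradient of the distortion are the moments of the Voronoi cells about their
points. -/
def intervalMoment (f : ℝ → ℝ) (t a b : ℝ) : ℝ := ∫ x in a..b, (t - x) * f x

lemma intervalIntegrable_sub_mul (hf : LocallyIntegrable f) (t a b : ℝ) :
    IntervalIntegrable (fun x => (t - x) * f x) volume a b :=
  (hf.integrableOn_isCompact isCompact_uIcc).intervalIntegrable.continuousOn_mul (by fun_prop)

lemma intervalMoment_lt_of_right_lt (hf : LocallyIntegrable f) (htb : t ≤ b') (hbb : b' < b)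
    (hpos : ∀ x ∈ Ioo b' b, 0 < f x) : intervalMoment f t a b < intervalMoment f t a b' := by
  have hright : 0 < ∫ x in b'..b, -((t - x) * f x) :=
    intervalIntegral.intervalIntegral_pos_of_pos_on (intervalIntegrable_sub_mul hf t b' b).neg
      (fun x hx => neg_pos.2 (mul_neg_of_neg_of_pos (by linarith [hx.1]) (hpos x hx))) hbb
  rw [intervalIntegral.integral_neg] at hright
  have hsplit := intervalIntegral.integral_add_adjacent_intervals
    (intervalIntegrable_sub_mul hf t a b') (intervalIntegrable_sub_mul hf t b' b)
  unfold intervalMoment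
  linarith

lemma intervalMoment_le_of_left_le (hf : LocallyIntegrable f) (haa : a' ≤ a) (hat : a ≤ t)
    (hnonneg : ∀ x ∈ Ioo a' a, 0 ≤ f x) : intervalMoment f t a b ≤ intervalMoment f t a' b := by
  have hleft : ∫ _ in a'..a, (0 : ℝ) ≤ ∫ x in a'..a, (t - x) * f x :=
    intervalIntegral.integral_mono_on_of_le_Ioo haa intervalIntegrable_const
      (intervalIntegrable_sub_mul hf t a' a)
      fun x hx => mul_nonneg (by linarith [hx.2]) (hnonneg x hx)
  rw [intervalIntegral.integral_zero] at hleft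
  have hsplit := intervalIntegral.integral_add_adjacent_intervals
    (intervalIntegrable_sub_mul hf t a' a) (intervalIntegrable_sub_mul hf t a b)
  unfold intervalMoment
  linarith

lemma intervalMoment_add_right (f : ℝ → ℝ) (t a b h : ℝ) :
    intervalMoment f (t + h) (a + h) (b + h) = intervalMoment (fun x => f (x + h)) t a b := by
  simp only [intervalMoment, ← intervalIntegral.integral_comp_add_right, add_sub_add_right_eq_sub]

lemma LogConcaveOn.mul_intervalMoment_le_shift (hlc : LogConcaveOn (Ioo l u) f)
    (hf : LocallyIntegrable f) (hla : l ≤ a) (hat : a < t) (htb : t < b) (hbu : b + h ≤ u)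
    (hh : 0 ≤ h) :
    f (t + h) * intervalMoment f t a b ≤ f t * intervalMoment f (t + h) (a + h) (b + h) := by
  have hshift : IntervalIntegrable (fun x => (t - x) * f (x + h)) volume a b := by
    simpa using (intervalIntegrable_sub_mul hf (t + h) (a + h) (b + h)).comp_add_right h
  rw [intervalMoment_add_right]
  unfold intervalMoment
  rw [← intervalIntegral.integral_const_mul, ← intervalIntegral.integral_const_mul]
  refine intervalIntegral.integral_mono_on_of_le_Ioo (hat.trans htb).le
    ((intervalIntegrable_sub_mul hf t a b).const_mul _) (hshift.const_mul _) fun x hx => ?_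
  obtain hxt | htx := le_total x t
  · have hratio : f (t + h) * f x ≤ f (x + h) * f t :=
      hlc.mul_le_mul_shift ⟨by linarith [hx.1], by linarith⟩ ⟨by linarith, by linarith⟩ hxt hh
    linear_combination mul_le_mul_of_nonneg_left hratio (sub_nonneg.2 hxt)
  · have hratio : f (x + h) * f t ≤ f (t + h) * f x :=
      hlc.mul_le_mul_shift ⟨by linarith, by linarith⟩ ⟨by linarith, by linarith [hx.2]⟩ htx hh
    linear_combination mul_le_mul_of_nonneg_left hratio (sub_nonneg.2 htx)

lemma LogConcaveOn.intervalMoment_pos_of_shift (hlc : LogConcaveOn (Ioo l u) f)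
    (hf : LocallyIntegrable f) (hla : l ≤ a) (hat : a < t) (hbu : b ≤ u)
    (hzero : intervalMoment f t a b = 0) (hla' : l ≤ a') (hbu' : b' ≤ u) (hh : 0 ≤ h)
    (haa : a' ≤ a + h) (htb : t + h < b') (hbb : b' < b + h) :
    0 < intervalMoment f (t + h) a' b' := by
  have hft : 0 < f t := hlc.1 t ⟨by linarith, by linarith⟩
  have hfth : 0 < f (t + h) := hlc.1 _ ⟨by linarith, by linarith⟩
  have htruncate : 0 < intervalMoment f t a (b' - h) :=
    hzero.symm.trans_lt <| intervalMoment_lt_of_right_lt hf (by linarith) (by linarith)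
      fun x hx => hlc.1 x ⟨by linarith [hx.1], hx.2.trans_le hbu⟩
  have hshift : f (t + h) * intervalMoment f t a (b' - h) ≤
      f t * intervalMoment f (t + h) (a + h) b' := by
    simpa using hlc.mul_intervalMoment_le_shift hf hla hat (by linarith : t < b' - h)
      (by linarith) hh
  refine (pos_of_mul_pos_right ((mul_pos hfth htruncate).trans_le hshift) hft.le).trans_le ?_
  exact intervalMoment_le_of_left_le hf haa (by linarith)
    fun x hx => (hlc.1 x ⟨hla'.trans_lt hx.1, by linarith [hx.2]⟩).le

end Moment

section Uniqueness

variable {n : ℕ} {f : ℝ → ℝ} {m m' : Fin (n + 1) → ℝ}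

lemma mem_Ioo_somBnd (hm : m ∈ Fplus (n + 1)) (i : Fin (n + 1)) :
    m i ∈ Ioo (somBnd m i) (somBnd m (i + 1)) :=
  ⟨somBnd_lt_of_pos hm.1 i (hm.2 i).1, lt_somBnd_of_lt_one hm.1 i (hm.2 i).2⟩

lemma gradV_eq_intervalMoment (hm : m ∈ Fplus (n + 1)) (i : Fin (n + 1)) :
    gradV f m i = intervalMoment f (m i) (somBnd m i) (somBnd m (i + 1)) := by
  have hi := mem_Ioo_somBnd hm i
  rw [gradV, intervalMoment, intervalIntegral.integral_of_le (hi.1.trans hi.2).le,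
    integral_Icc_eq_integral_Ioc]

lemma LogConcaveOn.sub_le_somBnd_succ_sub (hlc : LogConcaveOn (Ioo 0 1) f)
    (hf : LocallyIntegrable f) (hm : m ∈ Fplus (n + 1)) (hm' : m' ∈ Fplus (n + 1))
    {i : Fin (n + 1)} (hz : gradV f m i = 0) (hz' : gradV f m' i = 0) (hle : m i ≤ m' i)
    (hbnd : somBnd m' i - somBnd m i ≤ m' i - m i) :
    m' i - m i ≤ somBnd m' (i + 1) - somBnd m (i + 1) := by
  by_contra! hlt
  have hm01 (k : Fin (n + 1)) : m k ∈ Icc (0 : ℝ) 1 := Ioo_subset_Icc_self (hm.2 k)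
  have hm01' (k : Fin (n + 1)) : m' k ∈ Icc (0 : ℝ) 1 := Ioo_subset_Icc_self (hm'.2 k)
  rw [gradV_eq_intervalMoment hm] at hz
  rw [gradV_eq_intervalMoment hm'] at hz'
  have hpos : 0 < intervalMoment f (m i + (m' i - m i)) (somBnd m' i) (somBnd m' (i + 1)) :=
    hlc.intervalMoment_pos_of_shift hf (somBnd_mem_Icc hm01 i).1 (mem_Ioo_somBnd hm i).1
      (somBnd_mem_Icc hm01 _).2 hz (somBnd_mem_Icc hm01' i).1 (somBnd_mem_Icc hm01' _).2
      (sub_nonneg.2 hle) (by linarith) (by linarith [(mem_Ioo_somBnd hm' i).2]) (by linarith)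
  rw [add_sub_cancel, hz'] at hpos
  exact hpos.false

lemma LogConcaveOn.le_and_somBnd_sub_le_sub (hlc : LogConcaveOn (Ioo 0 1) f)
    (hf : LocallyIntegrable f) (hm : m ∈ Fplus (n + 1)) (hm' : m' ∈ Fplus (n + 1))
    (hz : ∀ i, gradV f m i = 0) (hz' : ∀ i, gradV f m' i = 0) (hle : m 0 ≤ m' 0)
    (i : Fin (n + 1)) : m i ≤ m' i ∧ somBnd m' i - somBnd m i ≤ m' i - m i := by
  induction i using Fin.induction with
  | zero => simpa [somBnd_zero] using hle
  | succ i ih =>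
    have hstep := hlc.sub_le_somBnd_succ_sub hf hm hm' (hz _) (hz' _) ih.1 ih.2
    rw [Fin.val_castSucc, somBnd_succ, somBnd_succ] at hstep
    rw [Fin.val_succ, somBnd_succ, somBnd_succ]
    constructor <;> linarith [ih.1]

lemma LogConcaveOn.le_of_gradV_eq_zero (hlc : LogConcaveOn (Ioo 0 1) f)
    (hf : LocallyIntegrable f) (hm : m ∈ Fplus (n + 1)) (hm' : m' ∈ Fplus (n + 1))
    (hz : ∀ i, gradV f m i = 0) (hz' : ∀ i, gradV f m' i = 0) (hle : m 0 ≤ m' 0) : m' ≤ m := by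
  have hstep (i : Fin (n + 1)) : m' i - m i ≤ somBnd m' (i + 1) - somBnd m (i + 1) :=
    let ⟨hi, hbnd⟩ := hlc.le_and_somBnd_sub_le_sub hf hm hm' hz hz' hle i
    hlc.sub_le_somBnd_succ_sub hf hm hm' (hz i) (hz' i) hi hbnd
  have hlast : m' (Fin.last n) - m (Fin.last n) ≤ 0 := by
    simpa [somBnd_last] using hstep (Fin.last n)
  have hmono : Monotone (m' - m) := Fin.monotone_iff_le_succ.2 fun i => by
    have hi := hstep i.castSucc
    rw [Fin.val_castSucc, somBnd_succ, somBnd_succ] at hi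
    simp only [Pi.sub_apply]
    linarith
  exact fun i => sub_nonpos.1 ((hmono i.le_last).trans hlast)

lemma LogConcaveOn.eq_of_gradV_eq_zero (hlc : LogConcaveOn (Ioo 0 1) f)
    (hf : LocallyIntegrable f) (hm : m ∈ Fplus (n + 1)) (hm' : m' ∈ Fplus (n + 1))
    (hz : ∀ i, gradV f m i = 0) (hz' : ∀ i, gradV f m' i = 0) : m = m' := by
  wlog hle : m 0 ≤ m' 0 generalizing m m'
  · exact (this hm' hm hz' hz (le_of_not_ge hle)).symm
  · have hge := hlc.le_of_gradV_eq_zero hf hm hm' hz hz' hle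
    refine le_antisymm (fun i => ?_) hge
    exact (hlc.le_and_somBnd_sub_le_sub hf hm hm' hz hz' hle i).1

end Uniqueness

theorem distortion_unique_zero_dim1_general {n : ℕ} (hn : 1 ≤ n) (μ : Measure ℝ)
    [IsFiniteMeasure μ] (f : ℝ → ℝ)
    (hdens : μ = volume.withDensity fun x => ENNReal.ofReal (f x))
    (hsupp : ∀ x, x ∉ Icc (0 : ℝ) 1 → f x = 0) (hf : LogConcaveOn (Ioo 0 1) f) :
    ∃ mstar : Fin n → ℝ,
      (mstar ∈ Fplus n ∧ ∀ i, gradV f mstar i = 0) ∧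
      (∀ m ∈ Fplus n, (∀ i, gradV f m i = 0) → m = mstar) ∧
      ∀ m : Fin n → ℝ, distortion1 μ mstar ≤ distortion1 μ m := by
  obtain ⟨k, rfl⟩ := Nat.exists_eq_add_of_le' hn
  subst hdens
  have hmeas := hf.aemeasurable hsupp
  have hnonneg := ae_nonneg_of_pos_on_Ioo hf.1 hsupp
  have hint : LocallyIntegrable f :=
    (integrable_of_isFiniteMeasure_withDensity hmeas hnonneg).locallyIntegrable
  obtain ⟨mstar, hmem, hcrit, hmin⟩ := exists_distortion1_minimizer_mem_Fplus
    (support_withDensity_ofReal zero_lt_one hmeas hf.1 hsupp) k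
  have hgrad (i : Fin (k + 1)) : gradV f mstar i = 0 :=
    (setIntegral_withDensity_ofReal hmeas hnonneg (measurableSet_voronoiCell mstar i) _).symm.trans
      (hcrit i)
  exact ⟨mstar, ⟨hmem, hgrad⟩,
    fun m hm hgrad' => hf.eq_of_gradV_eq_zero hint hm hmem hgrad' hgrad, hmin⟩

/-- In dimension 1, under `H_μ`, the gradient of the
distortion has a unique zero `m★_n` in `F_n^+`, and this point minimizes the
distortion over `F_n^+`. -/
theorem distortion_unique_zero_dim1 {n : ℕ} (hn : 1 ≤ n)
    (μ : Measure ℝ) [IsProbabilityMeasure μ] (f : ℝ → ℝ)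
    (hdens : μ = volume.withDensity fun x => ENNReal.ofReal (f x))
    (hsupp : ∀ x, x ∉ Set.Icc (0 : ℝ) 1 → f x = 0)
    (hHμ : Hmu f) :
    ∃ mstar : Fin n → ℝ,
      (mstar ∈ Fplus n ∧ ∀ i, gradV f mstar i = 0) ∧
      (∀ m ∈ Fplus n, (∀ i, gradV f m i = 0) → m = mstar) ∧
      ∀ m ∈ Fplus n, distortion1 μ mstar ≤ distortion1 μ m := by
  obtain ⟨mstar, hzero, huniq, hmin⟩ := distortion_unique_zero_dim1_general hn μ f hdens hsupp
    ⟨hHμ.1, hHμ.2.elim StrictConcaveOn.concaveOn And.left⟩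
  exact ⟨mstar, hzero, huniq, fun m _ => hmin m⟩

end
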